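/- Let α, β, c be real numbers such that 1−β, α+β+2c+2, c+1, α+β+c+1 and α+β+2c+1 are not nonpositive integers, let x ∈ (0,1) be real, and let t be real with 0 < |t| < 1. Set δ = ((1+t) − √((1+t)² − 4xt))/(2t), with the principal branch of the square root. Then Σ_{n=0}^{∞} ((α+β+c+1)_n (c+1)_n)/((α+β+2c+2)_n) · Y_n^{(α,β)}(x;c) · t^n/n! = (δ^{α+c+1})/(x^{c+1}·(x−tδ)^{α}) · F(−β−c, α+c+1; 1−β; δ) · F(c+1, β+c+1; α+β+2c+2; tδ/x), where complex powers are taken with the principal branch. -/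

import Mathlib

noncomputable section

/-- Rising factorial (Pochhammer symbol) `(a)_n = a(a+1)⋯(a+n-1)`. -/
def poch (a : ℝ) (n : ℕ) : ℝ := ∏ i ∈ Finset.range n, (a + (i : ℝ))

/-- The Gauss hypergeometric series `F(a,b;c;x) = Σ_{k≥0} (a)_k (b)_k / ((c)_k k!) xᵏ`. -/
def hyp (a b c x : ℝ) : ℝ :=
  ∑' k : ℕ, poch a k * poch b k / (poch c k * (Nat.factorial k : ℝ)) * x ^ k

/-- The Gauss hypergeometric function for real arguments `z < 1`, extended by
(principal branch) analytic continuation to arguments `z ≤ -1` via the Pfaff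
transformation `F(a,b;c;z) = (1-z)^{-a} F(a, c-b; c; z/(z-1))`, whose right-hand
side converges for all `z < 0`. -/
def hypExt (a b c z : ℝ) : ℝ :=
  if z < 0 then (1 - z) ^ (-a) * hyp a (c - b) c (z / (z - 1)) else hyp a b c z

/-- `δ = ((1+t) − √((1+t)² − 4xt))/(2t)`; for `x ∈ (0,1)` and `0 < |t| < 1` the
radicand is positive, so the principal branch of the complex square root is
the real square root. -/
def deltaF (x t : ℝ) : ℝ := ((1 + t) - Real.sqrt ((1 + t)^2 - 4*x*t)) / (2*t)

/-- `Y_n^{(α,β)}(x;c)`. -/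
def Yfun (α β c : ℝ) (n : ℕ) (x : ℝ) : ℝ :=
  (-1 : ℝ)^n * (poch (α + c + 1) n / poch (α + β + c + 1) n)
    * hyp (-(n:ℝ) - β - c) ((n:ℝ) + α + c + 1) (1 - β) x

/-- `Ỹ_n^{(α,β)}(x;c)`. -/
def Yt (α β c : ℝ) (n : ℕ) (x : ℝ) : ℝ :=
  (poch (c + 1) n * poch (α + β + c + 1) n / poch (α + β + 2*c + 1) (2*n)) * Yfun α β c n x

/-!
The summands are `uₙ F(A+n, B-n; C; x) tⁿ` with constants `uₙ`, where `A = α+c+1`, `B = -β-c` and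
`C = 1-β`. Since `tⁿ` is an eigenfunction of `θ = t ∂/∂t`, the hypergeometric equations of all these
functions of `x` combine into a single partial differential equation in `(x, t)`, and a solution
analytic near the axis `t = 0` is determined by its values on `x = 0`. This equation separates in
the coordinates `δ` and `w = -t/(1-tδ)` after the factor `(1-tδ)⁻ᴬ` is taken out, which gives the
solution `(1-tδ)⁻ᴬ F(A, B; C; δ) F(A, C-B; A-B+1; w)`. On `x = 0` one has `δ = 0` and `w = -t`, so
that `uₙ` is read off the second factor, and the Pfaff transformation turns this factor into a
function of `tδ/x = w/(w-1)`.

The product formula thus holds for small `t`, and its right-hand side is analytic for `|t| < 1`. To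
see that the power series converges there, one bounds `F(A+n, B-n; C; x)` polynomially in `n`: if
`C ≥ 1/2`, an energy estimate for the hypergeometric equation gives a bound independent of `n`, and
a contiguous relation reduces smaller `C` to this case.
-/

open Asymptotics Filter Set Topology
open FormalMultilinearSeries (ofScalars ofScalars_norm ofScalars_series_injective)

section AnalyticFunctions

lemma hasFPowerSeriesOnBall_tsum_mul_pow {u : ℕ → ℝ} {r : ENNReal} (hr : 0 < r)
    (h : r ≤ (ofScalars ℝ u).radius) :
    HasFPowerSeriesOnBall (fun z => ∑' k, u k * z ^ k) (ofScalars ℝ u) 0 r := by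
  have hsum : (ofScalars ℝ u).sum = fun z => ∑' k, u k * z ^ k := by
    ext z
    simp [FormalMultilinearSeries.sum, mul_comm]
  exact hsum ▸ ((ofScalars ℝ u).hasFPowerSeriesOnBall (hr.trans_le h)).mono hr h

lemma iteratedDeriv_eq_of_hasFPowerSeriesAt {f : ℝ → ℝ} {u : ℕ → ℝ} {z : ℝ}
    (h : HasFPowerSeriesAt f (ofScalars ℝ u) z) (n : ℕ) :
    iteratedDeriv n f z = n.factorial * u n := by
  have hu := congrFun (ofScalars_series_injective ℝ ℝ
    (h.eq_formalMultilinearSeries h.analyticAt.hasFPowerSeriesAt)) n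
  rw [hu]
  field_simp

lemma eventuallyEq_of_iteratedDeriv_eq {f g : ℝ → ℝ} {z : ℝ} (hf : AnalyticAt ℝ f z)
    (hg : AnalyticAt ℝ g z) (h : ∀ n, iteratedDeriv n f z = iteratedDeriv n g z) :
    f =ᶠ[𝓝 z] g := by
  have hfs := hf.hasFPowerSeriesAt
  simp only [h] at hfs
  have hsub := hfs.sub hg.hasFPowerSeriesAt
  rw [sub_self] at hsub
  filter_upwards [hsub.eventually_eq_zero] with w hw
  exact sub_eq_zero.1 hw

lemma hasSum_mul_pow_of_iteratedDeriv_eq {f : ℝ → ℝ} {u : ℕ → ℝ} {r : ENNReal} {z : ℝ}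
    (hu : r ≤ (ofScalars ℝ u).radius) (hf : AnalyticOnNhd ℝ f (Metric.eball 0 r))
    (h : ∀ n, iteratedDeriv n f 0 = n.factorial * u n) (hz : z ∈ Metric.eball 0 r) :
    HasSum (fun n => u n * z ^ n) (f z) := by
  have hr : 0 < r := pos_of_gt (Metric.mem_eball.1 hz)
  have hseries := hasFPowerSeriesOnBall_tsum_mul_pow hr hu
  have hlocal : f =ᶠ[𝓝 0] fun z => ∑' n, u n * z ^ n :=
    eventuallyEq_of_iteratedDeriv_eq (hf 0 (Metric.mem_eball_self hr)) hseries.analyticAt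
      fun n => by rw [h, iteratedDeriv_eq_of_hasFPowerSeriesAt hseries.hasFPowerSeriesAt]
  have heq := hf.eqOn_of_preconnected_of_eventuallyEq hseries.analyticOnNhd
    Metric.isPreconnected_eball (Metric.mem_eball_self hr) hlocal hz
  simpa [heq, mul_comm] using hseries.hasSum hz

lemma analyticAt_rpow_const {E : Type*} [NormedAddCommGroup E] [NormedSpace ℝ E] {f : E → ℝ}
    {x : E} (hf : AnalyticAt ℝ f x) (hx : 0 < f x) (p : ℝ) :
    AnalyticAt ℝ (fun y => f y ^ p) x := by
  have : AnalyticAt ℝ (fun y => Real.log (f y)) x := (analyticAt_log hx).fun_comp hf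
  have hexp : AnalyticAt ℝ (fun y => Real.exp (Real.log (f y) * p)) x := by fun_prop
  refine hexp.congr ?_
  filter_upwards [hf.continuousAt.eventually (eventually_gt_nhds hx)] with y hy
  rw [Real.rpow_def_of_pos hy]

lemma analyticAt_sqrt {E : Type*} [NormedAddCommGroup E] [NormedSpace ℝ E] {f : E → ℝ} {x : E}
    (hf : AnalyticAt ℝ f x) (hx : 0 < f x) : AnalyticAt ℝ (fun y => √(f y)) x := by
  simp only [Real.sqrt_eq_rpow]
  exact analyticAt_rpow_const hf hx _

lemma radius_le_radius_mul_of_isBigO {u v : ℕ → ℝ} {k : ℕ}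
    (hv : v =O[atTop] fun n => (n : ℝ) ^ k) :
    (ofScalars ℝ u).radius ≤ (ofScalars ℝ fun n => u n * v n).radius := by
  refine ENNReal.le_of_forall_nnreal_lt fun r hr => ?_
  obtain ⟨q, ⟨hq0, hq1⟩, ho⟩ := (ofScalars ℝ u).isLittleO_of_lt_radius hr
  refine FormalMultilinearSeries.le_radius_of_isBigO _ ?_
  have hq : (fun n : ℕ => (n : ℝ) ^ k * q ^ n) =O[atTop] fun _ => (1 : ℝ) :=
    (tendsto_pow_const_mul_const_pow_of_abs_lt_one k (by rwa [abs_of_pos hq0])).isBigO_one ℝ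
  refine IsBigO.trans (IsBigO.of_norm_left ?_) ((hv.mul ho.isBigO).trans hq)
  refine isBigO_of_le _ fun n => le_of_eq ?_
  simp only [ofScalars_norm, norm_mul, norm_norm, norm_pow]
  ring

end AnalyticFunctions

section HypergeometricSeries

lemma poch_zero (a : ℝ) : poch a 0 = 1 := by simp [poch]

lemma poch_succ (a : ℝ) (n : ℕ) : poch a (n + 1) = poch a n * (a + n) := by
  simp [poch, Finset.prod_range_succ]

lemma poch_succ_left (a : ℝ) (n : ℕ) : poch a (n + 1) = a * poch (a + 1) n := by
  simp [poch, Finset.prod_range_succ', add_assoc, add_comm (1 : ℝ), mul_comm a]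

lemma poch_ne_zero {a : ℝ} (h : ∀ m : ℕ, a ≠ -(m : ℝ)) (n : ℕ) : poch a n ≠ 0 :=
  Finset.prod_ne_zero_iff.2 fun i _ hi => h i (eq_neg_of_add_eq_zero_left hi)

lemma poch_eq_ascPochhammer_eval (a : ℝ) (n : ℕ) : poch a n = (ascPochhammer ℝ n).eval a := by
  induction n with
  | zero => simp [poch_zero]
  | succ n ih => rw [poch_succ, ascPochhammer_succ_eval, ih]

/-- The Taylor coefficient `(a)_k (b)_k / ((c)_k k!)` of the Gauss hypergeometric series. -/
def hypCoeff (a b c : ℝ) (k : ℕ) : ℝ := poch a k * poch b k / (poch c k * (k.factorial : ℝ))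

lemma hypCoeff_zero (a b c : ℝ) : hypCoeff a b c 0 = 1 := by simp [hypCoeff, poch_zero]

lemma hypCoeff_succ {a b c : ℝ} (hc : ∀ m : ℕ, c ≠ -(m : ℝ)) (k : ℕ) :
    (c + k) * ((k + 1) * hypCoeff a b c (k + 1)) = (a + k) * (b + k) * hypCoeff a b c k := by
  have hpoch := poch_ne_zero hc k
  have hck : c + k ≠ 0 := fun h => hc k (eq_neg_of_add_eq_zero_left h)
  simp only [hypCoeff, poch_succ, Nat.factorial_succ]
  push_cast
  field_simp

lemma hypCoeff_contiguous {a b c : ℝ} (hc : ∀ m : ℕ, c ≠ -(m : ℝ)) (k : ℕ) :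
    hypCoeff a b c (k + 1) = hypCoeff a b (c + 1) (k + 1)
      + a * b / (c * (c + 1)) * hypCoeff (a + 1) (b + 1) (c + 2) k := by
  have hc0 : c ≠ 0 := by simpa using hc 0
  have hc1 : ∀ m : ℕ, c + 1 ≠ -(m : ℝ) := fun m h => hc (m + 1) (by push_cast; linarith)
  have hc1' : c + 1 ≠ 0 := by simpa using hc1 0
  have hck : c + 1 + k ≠ 0 := fun h => hc1 k (eq_neg_of_add_eq_zero_left h)
  have hpoch := poch_ne_zero hc1 k
  have hpoch2 : poch (c + 2) k = poch (c + 1) k * (c + 1 + k) / (c + 1) := by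
    rw [eq_div_iff hc1', ← poch_succ, poch_succ_left, mul_comm]
    ring_nf
  simp only [hypCoeff, hpoch2, poch_succ (c + 1), poch_succ_left a, poch_succ_left b,
    poch_succ_left c, Nat.factorial_succ]
  push_cast
  field_simp
  ring

lemma ordinaryHypergeometricSeries_eq_ofScalars_hypCoeff (a b c : ℝ) :
    ordinaryHypergeometricSeries ℝ a b c = ofScalars ℝ (hypCoeff a b c) := by
  unfold ordinaryHypergeometricSeries
  congr 1
  ext n
  simp only [hypCoeff, poch_eq_ascPochhammer_eval, ordinaryHypergeometricCoefficient,
    div_eq_mul_inv, mul_inv]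
  ring

lemma one_le_radius_hypCoeff (a b c : ℝ) : 1 ≤ (ofScalars ℝ (hypCoeff a b c)).radius := by
  rw [← ordinaryHypergeometricSeries_eq_ofScalars_hypCoeff]
  by_cases h : ∀ k : ℕ, (k : ℝ) ≠ -a ∧ (k : ℝ) ≠ -b ∧ (k : ℝ) ≠ -c
  · rw [ordinaryHypergeometricSeries_radius_eq_one ℝ a b c h]
  · simp only [not_forall, not_and_or, not_not] at h
    obtain ⟨k, h | h | h⟩ := h
    · simp [neg_eq_iff_eq_neg.1 h.symm, ordinaryHypergeometric_radius_top_of_neg_nat₁]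
    · simp [neg_eq_iff_eq_neg.1 h.symm, ordinaryHypergeometric_radius_top_of_neg_nat₂]
    · simp [neg_eq_iff_eq_neg.1 h.symm, ordinaryHypergeometric_radius_top_of_neg_nat₃]

lemma hasFPowerSeriesOnBall_hyp (a b c : ℝ) :
    HasFPowerSeriesOnBall (hyp a b c) (ofScalars ℝ (hypCoeff a b c)) 0 1 :=
  hasFPowerSeriesOnBall_tsum_mul_pow one_pos (one_le_radius_hypCoeff a b c)

lemma mem_eball_zero_one {z : ℝ} : z ∈ Metric.eball (0 : ℝ) 1 ↔ |z| < 1 := by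
  simp [← ENNReal.ofReal_one, Metric.eball_ofReal]

lemma analyticAt_hyp (a b c : ℝ) {z : ℝ} (hz : |z| < 1) : AnalyticAt ℝ (hyp a b c) z :=
  (hasFPowerSeriesOnBall_hyp a b c).analyticAt_of_mem (mem_eball_zero_one.2 hz)

lemma hasSum_hyp (a b c : ℝ) {z : ℝ} (hz : |z| < 1) :
    HasSum (fun k => hypCoeff a b c k * z ^ k) (hyp a b c z) := by
  simpa [mul_comm] using (hasFPowerSeriesOnBall_hyp a b c).hasSum (mem_eball_zero_one.2 hz)

lemma iteratedDeriv_hyp_zero (a b c : ℝ) (n : ℕ) :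
    iteratedDeriv n (hyp a b c) 0 = n.factorial * hypCoeff a b c n :=
  iteratedDeriv_eq_of_hasFPowerSeriesAt (hasFPowerSeriesOnBall_hyp a b c).hasFPowerSeriesAt n

lemma hyp_zero (a b c : ℝ) : hyp a b c 0 = 1 := by
  simpa [hypCoeff_zero] using iteratedDeriv_hyp_zero a b c 0

lemma hyp_comm (a b c : ℝ) : hyp a b c = hyp b a c := by
  ext z
  simp only [hyp, mul_comm (poch a _)]

lemma hyp_contiguous (a b : ℝ) {c z : ℝ} (hc : ∀ m : ℕ, c ≠ -(m : ℝ)) (hz : |z| < 1) :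
    hyp a b c z = hyp a b (c + 1) z
      + a * b / (c * (c + 1)) * z * hyp (a + 1) (b + 1) (c + 2) z := by
  have hdiff := (hasSum_nat_add_iff' 1).2 ((hasSum_hyp a b c hz).sub (hasSum_hyp a b (c + 1) hz))
  have hshift := (hasSum_hyp (a + 1) (b + 1) (c + 2) hz).mul_left (a * b / (c * (c + 1)) * z)
  have heq := hdiff.unique (hshift.congr_fun fun k => ?_)
  · simp only [Finset.sum_range_one, hypCoeff_zero] at heq
    linarith
  · rw [hypCoeff_contiguous hc]
    ring

end HypergeometricSeries

section HypergeometricEquation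

/-- The hypergeometric differential operator
`y ↦ z (1 - z) y'' + (c - (a + b + 1) z) y' - a b y`. -/
def hypOp (a b c : ℝ) (y : ℝ → ℝ) (z : ℝ) : ℝ :=
  z * (1 - z) * deriv (deriv y) z + (c - (a + b + 1) * z) * deriv y z - a * b * y z

variable {a b c z : ℝ} {y : ℝ → ℝ}

lemma analyticAt_hypOp (hy : AnalyticAt ℝ y z) : AnalyticAt ℝ (hypOp a b c y) z := by
  have hy' := hy.deriv
  have := hy'.deriv
  unfold hypOp
  fun_prop

lemma deriv_hypOp (hy : AnalyticAt ℝ y z) :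
    deriv (hypOp a b c y) z = hypOp (a + 1) (b + 1) (c + 1) (deriv y) z := by
  have h0 := hy.differentiableAt.hasDerivAt
  have h1 := hy.deriv.differentiableAt.hasDerivAt
  have h2 := hy.deriv.deriv.differentiableAt.hasDerivAt
  have hid := hasDerivAt_id' z
  have h : HasDerivAt (hypOp a b c y) _ z := (((hid.mul (hid.const_sub 1)).mul h2).add
    (((hid.const_mul (a + b + 1)).const_sub c).mul h1)).sub (h0.const_mul (a * b))
  rw [h.deriv]
  simp only [hypOp, Pi.mul_apply]
  ring

lemma iteratedDeriv_hypOp (hy : AnalyticAt ℝ y z) (n : ℕ) :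
    iteratedDeriv n (hypOp a b c y) z = hypOp (a + n) (b + n) (c + n) (iteratedDeriv n y) z := by
  induction n generalizing a b c y with
  | zero => simp
  | succ n ih =>
    have hderiv : deriv (hypOp a b c y) =ᶠ[𝓝 z] hypOp (a + 1) (b + 1) (c + 1) (deriv y) :=
      hy.eventually_analyticAt.mono fun _ => deriv_hypOp
    rw [iteratedDeriv_succ', iteratedDeriv_succ', hderiv.iteratedDeriv_eq n, ih hy.deriv]
    push_cast
    ring_nf

lemma iteratedDeriv_hypOp_zero (hy : AnalyticAt ℝ y 0) (n : ℕ) :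
    iteratedDeriv n (hypOp a b c y) 0 =
      (c + n) * iteratedDeriv (n + 1) y 0 - (a + n) * (b + n) * iteratedDeriv n y 0 := by
  simp [iteratedDeriv_hypOp hy, iteratedDeriv_succ, hypOp]

lemma hypOp_hyp (hc : ∀ m : ℕ, c ≠ -(m : ℝ)) (hz : |z| < 1) : hypOp a b c (hyp a b c) z = 0 := by
  have han : AnalyticOnNhd ℝ (hypOp a b c (hyp a b c)) (Metric.ball 0 1) := fun w hw =>
    analyticAt_hypOp (analyticAt_hyp a b c (by simpa using hw))
  have hzero : hypOp a b c (hyp a b c) =ᶠ[𝓝 0] 0 := by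
    have hy := analyticAt_hyp a b c (z := 0) (by simp)
    refine eventuallyEq_of_iteratedDeriv_eq (analyticAt_hypOp hy) analyticAt_const fun n => ?_
    rw [iteratedDeriv_hypOp_zero hy, iteratedDeriv_hyp_zero, iteratedDeriv_hyp_zero]
    have hrec := hypCoeff_succ (a := a) (b := b) hc n
    simp only [Nat.factorial_succ, iteratedDeriv_const_zero]
    push_cast
    linear_combination (n.factorial : ℝ) * hrec
  exact han.eqOn_of_preconnected_of_eventuallyEq analyticOnNhd_const Metric.isPreconnected_ball
    (by simp) hzero (by simpa using hz)

lemma eventuallyEq_hyp_of_hypOp_eq_zero (hc : ∀ m : ℕ, c ≠ -(m : ℝ)) (hy : AnalyticAt ℝ y 0)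
    (hop : hypOp a b c y =ᶠ[𝓝 0] 0) : y =ᶠ[𝓝 0] fun z => y 0 * hyp a b c z := by
  have hhyp := analyticAt_hyp a b c (z := 0) (by simp)
  refine eventuallyEq_of_iteratedDeriv_eq hy (by fun_prop) fun n => ?_
  rw [iteratedDeriv_const_mul_field, iteratedDeriv_hyp_zero]
  induction n with
  | zero => simp [hypCoeff_zero]
  | succ n ih =>
    have hcn : c + n ≠ 0 := fun h => hc n (eq_neg_of_add_eq_zero_left h)
    have hrec := hypCoeff_succ (a := a) (b := b) hc n
    have hderiv := iteratedDeriv_hypOp_zero (a := a) (b := b) (c := c) hy n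
    rw [hop.iteratedDeriv_eq n, ih] at hderiv
    have hconst : iteratedDeriv n (0 : ℝ → ℝ) 0 = 0 := by simp
    apply mul_left_cancel₀ hcn
    rw [Nat.factorial_succ]
    push_cast
    linear_combination hconst - hderiv - y 0 * n.factorial * hrec

lemma eq_hyp_of_hypOp_eq_zero (hc : ∀ m : ℕ, c ≠ -(m : ℝ)) {I : Set ℝ} (hI : IsPreconnected I)
    (hIball : I ⊆ Metric.ball 0 1) (h0 : (0 : ℝ) ∈ I) (hy : AnalyticOnNhd ℝ y I)
    (hop : hypOp a b c y =ᶠ[𝓝 0] 0) (hz : z ∈ I) : y z = y 0 * hyp a b c z :=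
  hy.eqOn_of_preconnected_of_eventuallyEq
    (fun w hw => analyticAt_const.mul (analyticAt_hyp a b c (by simpa using hIball hw)))
    hI h0 (eventuallyEq_hyp_of_hypOp_eq_zero hc (hy 0 h0) hop) hz

end HypergeometricEquation

section Growth

variable {a b c x : ℝ}

/-- The energy `y² + z (1 - z) y'² / (-a b)` of the hypergeometric function `y = F(a,b;c;z)`,
a Lyapunov function for its differential equation when `a b < 0`. -/
def hypEnergy (a b c z : ℝ) : ℝ :=
  hyp a b c z ^ 2 + z * (1 - z) * deriv (hyp a b c) z ^ 2 / (-(a * b))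

lemma hasDerivAt_hypEnergy (hc : ∀ m : ℕ, c ≠ -(m : ℝ)) (hab : a * b < 0) {z : ℝ}
    (hz : |z| < 1) :
    HasDerivAt (hypEnergy a b c)
      ((1 - 2 * c + 2 * (a + b) * z) * deriv (hyp a b c) z ^ 2 / (-(a * b))) z := by
  have hy := analyticAt_hyp a b c hz
  have h0 := hy.differentiableAt.hasDerivAt
  have h1 := hy.deriv.differentiableAt.hasDerivAt
  have hid := hasDerivAt_id' z
  have hode := hypOp_hyp (a := a) (b := b) hc hz
  refine ((h0.fun_pow 2).add ((((hid.fun_mul (hid.const_sub 1)).fun_mul (h1.fun_pow 2)).div_const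
    (-(a * b))))).congr_deriv ?_
  unfold hypOp at hode
  have ha : a ≠ 0 := left_ne_zero_of_mul hab.ne
  have hb : b ≠ 0 := right_ne_zero_of_mul hab.ne
  field_simp
  linear_combination (-2 * deriv (hyp a b c) z) * hode

lemma deriv_hypEnergy_le (hc : 1 / 2 ≤ c) (hab : a * b < 0) {z : ℝ} (hz0 : 0 ≤ z) (hzx : z ≤ x)
    (hx : x < 1) :
    (1 - 2 * c + 2 * (a + b) * z) * deriv (hyp a b c) z ^ 2 / (-(a * b))
      ≤ 2 * |a + b| / (1 - x) * hypEnergy a b c z := by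
  have hx' : 0 < 1 - x := by linarith
  have hE : 0 ≤ deriv (hyp a b c) z ^ 2 / (-(a * b)) := by
    have := neg_pos.2 hab
    positivity
  set E := deriv (hyp a b c) z ^ 2 / (-(a * b)) with hEdef
  calc (1 - 2 * c + 2 * (a + b) * z) * deriv (hyp a b c) z ^ 2 / (-(a * b))
      = (1 - 2 * c + 2 * (a + b) * z) * E := mul_div_assoc _ _ _
    _ ≤ 2 * |a + b| * z * E := by
        have := mul_le_mul_of_nonneg_right (le_abs_self (a + b)) hz0
        gcongr
        linarith
    _ = 2 * |a + b| / (1 - x) * (z * (1 - x) * E) := by field_simp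
    _ ≤ 2 * |a + b| / (1 - x) * hypEnergy a b c z := by
        gcongr
        have : z * (1 - x) * E ≤ z * (1 - z) * E := by gcongr
        rw [hypEnergy, mul_div_assoc, ← hEdef]
        linarith [sq_nonneg (hyp a b c z)]

lemma sq_hyp_le_exp (hc : 1 / 2 ≤ c) (hab : a * b < 0) (hx0 : 0 ≤ x) (hx1 : x < 1) :
    hyp a b c x ^ 2 ≤ Real.exp (2 * |a + b| / (1 - x) * x) := by
  have hc' : ∀ m : ℕ, c ≠ -(m : ℝ) := fun m h => by linarith [m.cast_nonneg (α := ℝ)]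
  set M := 2 * |a + b| / (1 - x)
  have hderiv : ∀ z ∈ Icc 0 x, HasDerivAt (fun z => hypEnergy a b c z * Real.exp (-(M * z))) _ z :=
    fun z hz =>
      (hasDerivAt_hypEnergy hc' hab (abs_lt.2 ⟨by linarith [hz.1], hz.2.trans_lt hx1⟩)).mul
        ((hasDerivAt_id' z).const_mul M).fun_neg.exp
  have hanti : AntitoneOn (fun z => hypEnergy a b c z * Real.exp (-(M * z))) (Icc 0 x) := by
    refine antitoneOn_of_hasDerivWithinAt_nonpos (convex_Icc 0 x)
      (fun z hz => (hderiv z hz).continuousAt.continuousWithinAt)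
      (fun z hz => (hderiv z (interior_subset hz)).hasDerivWithinAt) fun z hz => ?_
    have hz := interior_subset hz
    have hle := deriv_hypEnergy_le hc hab hz.1 hz.2 hx1
    linarith [mul_le_mul_of_nonneg_right hle (Real.exp_pos (-(M * z))).le]
  have hle := hanti (left_mem_Icc.2 hx0) (right_mem_Icc.2 hx0) hx0
  have hE : hyp a b c x ^ 2 ≤ hypEnergy a b c x := by
    have := neg_pos.2 hab
    have := sub_pos.2 hx1
    unfold hypEnergy
    simp only [le_add_iff_nonneg_right]
    positivity
  have hE0 : hypEnergy a b c 0 = 1 := by simp [hypEnergy, hyp_zero]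
  simp only [hE0, mul_zero, neg_zero, Real.exp_zero, mul_one, Real.exp_neg] at hle
  rw [← div_eq_mul_inv, div_le_one (Real.exp_pos _)] at hle
  exact hE.trans hle

lemma isBigO_hyp_add_sub_one (hc : 1 / 2 ≤ c) (hx0 : 0 ≤ x) (hx1 : x < 1) :
    (fun n : ℕ => hyp (a + n) (b - n) c x) =O[atTop] fun _ => (1 : ℝ) := by
  have hneg : ∀ᶠ n : ℕ in atTop, (a + n) * (b - n) < 0 := by
    filter_upwards [tendsto_natCast_atTop_atTop.eventually_gt_atTop (-a),
      tendsto_natCast_atTop_atTop.eventually_gt_atTop b] with n hna hnb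
    exact mul_neg_of_pos_of_neg (by linarith) (by linarith)
  refine IsBigO.of_bound √(Real.exp (2 * |a + b| / (1 - x) * x)) ?_
  filter_upwards [hneg] with n hn
  have hle := sq_hyp_le_exp hc hn hx0 hx1
  rw [show a + n + (b - n) = a + b by ring] at hle
  simpa using Real.abs_le_sqrt hle

lemma isBigO_hyp_add_sub_pow (m : ℕ) (hc : ∀ k : ℕ, c ≠ -(k : ℝ)) (hcm : 1 / 2 ≤ c + m)
    (hx0 : 0 ≤ x) (hx1 : x < 1) :
    (fun n : ℕ => hyp (a + n) (b - n) c x) =O[atTop] fun n => (n : ℝ) ^ (2 * m) := by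
  induction m generalizing a b c with
  | zero => simpa using isBigO_hyp_add_sub_one (by simpa using hcm) hx0 hx1
  | succ m ih =>
    push_cast at hcm
    have hc1 : ∀ k : ℕ, c + 1 ≠ -(k : ℝ) := fun k h => hc (k + 1) (by push_cast; linarith)
    have hc2 : ∀ k : ℕ, c + 2 ≠ -(k : ℝ) := fun k h => hc (k + 2) (by push_cast; linarith)
    have hcont : (fun n : ℕ => hyp (a + n) (b - n) c x) = fun n : ℕ =>
        hyp (a + n) (b - n) (c + 1) x + (a + n) * (b - n) *
          (x / (c * (c + 1)) * hyp (a + 1 + n) (b + 1 - n) (c + 2) x) := by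
      ext n
      rw [hyp_contiguous _ _ hc (by rwa [abs_of_nonneg hx0]), add_right_comm a, add_sub_right_comm]
      ring
    have hn : ∀ r : ℝ, (fun _ : ℕ => r) =O[atTop] fun n : ℕ => (n : ℝ) := fun r =>
      (isLittleO_const_id_atTop r |>.comp_tendsto tendsto_natCast_atTop_atTop).isBigO
    have hid := isBigO_refl (fun n : ℕ => (n : ℝ)) atTop
    have hprod := (((hn a).add hid).mul ((hn b).sub hid)).mul
      ((ih (a := a + 1) (b := b + 1) hc2 (by linarith)).const_mul_left (x / (c * (c + 1))))
    have hmono : (fun n : ℕ => (n : ℝ) ^ (2 * m)) =O[atTop] fun n => (n : ℝ) ^ (2 * (m + 1)) :=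
      IsBigO.pow_of_le_right ((eventually_ge_atTop 1).mono fun n hn => by simpa using hn) (by lia)
    rw [hcont]
    refine ((ih hc1 (by linarith)).trans hmono).add (hprod.congr_right fun n => ?_)
    ring

lemma exists_isBigO_hyp_add_sub_pow (a b : ℝ) (hc : ∀ k : ℕ, c ≠ -(k : ℝ)) (hx0 : 0 ≤ x)
    (hx1 : x < 1) :
    ∃ k : ℕ, (fun n : ℕ => hyp (a + n) (b - n) c x) =O[atTop] fun n => (n : ℝ) ^ k := by
  obtain ⟨m, hm⟩ := exists_nat_ge (1 / 2 - c)
  exact ⟨2 * m, isBigO_hyp_add_sub_pow m hc (by linarith) hx0 hx1⟩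

end Growth

section PfaffTransformation

/-- The Pfaff transform `z ↦ (1 - z)^(-a) h(z / (z - 1))` of a function `h`. -/
def pfaffTransform (a : ℝ) (h : ℝ → ℝ) (z : ℝ) : ℝ := (1 - z) ^ (-a) * h (z / (z - 1))

variable {a b c z : ℝ} {h : ℝ → ℝ}

lemma pfaffTransform_add_natCast (hz : z < 1) (n : ℕ) :
    pfaffTransform (a + n) h z = pfaffTransform a h z / (1 - z) ^ n := by
  have hz' : 0 < 1 - z := by linarith
  rw [pfaffTransform, pfaffTransform, neg_add, Real.rpow_add hz', Real.rpow_neg hz'.le n,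
    Real.rpow_natCast]
  ring

lemma abs_div_sub_one_lt_one (hz : z < 1 / 2) : |z / (z - 1)| < 1 := by
  rw [abs_div, div_lt_one (abs_pos.2 (by linarith)), abs_sub_comm, abs_of_pos (a := 1 - z)
    (by linarith), abs_lt]
  constructor <;> linarith

lemma analyticAt_pfaffTransform (hz : z < 1) (hh : AnalyticAt ℝ h (z / (z - 1))) :
    AnalyticAt ℝ (pfaffTransform a h) z := by
  have hz' : z - 1 ≠ 0 := by linarith
  have hpow := analyticAt_rpow_const (f := fun z : ℝ => 1 - z) (by fun_prop)
    (by linarith : 0 < 1 - z) (-a)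
  exact hpow.mul (hh.fun_comp_of_eq (by fun_prop (disch := assumption)) rfl)

lemma hasDerivAt_pfaffTransform (hz : z < 1) (hh : DifferentiableAt ℝ h (z / (z - 1))) :
    HasDerivAt (pfaffTransform a h)
      (a * pfaffTransform (a + 1) h z - pfaffTransform (a + 2) (deriv h) z) z := by
  have hz' : z - 1 ≠ 0 := by linarith
  have hz'' : 1 - z ≠ 0 := by linarith
  have hid := hasDerivAt_id' z
  have hpow := (hid.const_sub 1).rpow_const (p := -a) (Or.inl hz'')
  have hcomp := hh.hasDerivAt.comp z (hid.fun_div (hid.sub_const 1) hz')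
  refine (hpow.fun_mul hcomp).congr_deriv ?_
  have h1 := pfaffTransform_add_natCast (a := a) (h := h) hz 1
  have h2 := pfaffTransform_add_natCast (a := a) (h := deriv h) hz 2
  push_cast at h1 h2
  rw [h1, h2, pfaffTransform, pfaffTransform, Real.rpow_sub_one hz'', Function.comp_apply]
  field_simp
  ring

lemma deriv_deriv_pfaffTransform (hz : z < 1) (hh : AnalyticAt ℝ h (z / (z - 1))) :
    deriv (deriv (pfaffTransform a h)) z =
      a * (a + 1) * pfaffTransform (a + 2) h z
        - 2 * (a + 1) * pfaffTransform (a + 3) (deriv h) z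
        + pfaffTransform (a + 4) (deriv (deriv h)) z := by
  have hz' : z - 1 ≠ 0 := by linarith
  have hcont : ContinuousAt (fun z : ℝ => z / (z - 1)) z := by fun_prop (disch := assumption)
  have hderiv : deriv (pfaffTransform a h) =ᶠ[𝓝 z] fun w =>
      a * pfaffTransform (a + 1) h w - pfaffTransform (a + 2) (deriv h) w := by
    filter_upwards [hcont.eventually hh.eventually_analyticAt, eventually_lt_nhds hz] with w hw hw1
    exact (hasDerivAt_pfaffTransform hw1 hw.differentiableAt).deriv
  have h1 := hasDerivAt_pfaffTransform (a := a + 1) hz hh.differentiableAt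
  have h2 := hasDerivAt_pfaffTransform (a := a + 2) hz hh.deriv.differentiableAt
  rw [hderiv.deriv_eq, ((h1.const_mul a).fun_sub h2).deriv]
  ring_nf

lemma hypOp_pfaffTransform (hz : z < 1) (hh : AnalyticAt ℝ h (z / (z - 1))) :
    hypOp a b c (pfaffTransform a h) z = -pfaffTransform (a + 1) (hypOp a (c - b) c h) z := by
  have hz' : 1 - z ≠ 0 := by linarith
  have hshift (n : ℕ) (g : ℝ → ℝ) := pfaffTransform_add_natCast (a := a) (h := g) hz n
  have h1 := hshift 1
  have h2 := hshift 2
  have h3 := hshift 3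
  have h4 := hshift 4
  push_cast at h1 h2 h3 h4
  rw [hypOp, deriv_deriv_pfaffTransform hz hh,
    (hasDerivAt_pfaffTransform hz hh.differentiableAt).deriv]
  simp only [h1, h2, h3, h4]
  simp only [pfaffTransform, hypOp, ← neg_sub 1 z]
  field_simp
  ring

lemma hyp_eq_pfaffTransform (hc : ∀ m : ℕ, c ≠ -(m : ℝ)) (hz0 : -1 < z) (hz1 : z < 1 / 2) :
    hyp a b c z = pfaffTransform a (hyp a (c - b) c) z := by
  have han (w : ℝ) (hw : w < 1 / 2) : AnalyticAt ℝ (hyp a (c - b) c) (w / (w - 1)) :=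
    analyticAt_hyp _ _ _ (abs_div_sub_one_lt_one hw)
  have heq := eq_hyp_of_hypOp_eq_zero (a := a) (b := b)
    (y := pfaffTransform a (hyp a (c - b) c)) hc (isPreconnected_Ioo (a := -1) (b := 1 / 2))
    (by rw [Real.ball_eq_Ioo]; exact Ioo_subset_Ioo (by norm_num) (by norm_num)) (by norm_num)
    (fun w hw => analyticAt_pfaffTransform (by linarith [hw.2]) (han w hw.2)) ?_ ⟨hz0, hz1⟩
  · rw [heq]
    simp [pfaffTransform, hyp_zero]
  · filter_upwards [eventually_lt_nhds (show (0 : ℝ) < 1 / 2 by norm_num)] with w hw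
    rw [hypOp_pfaffTransform (by linarith) (han w hw)]
    simp [pfaffTransform, hypOp_hyp hc (abs_div_sub_one_lt_one hw)]

lemma hypExt_of_nonneg (hz : 0 ≤ z) : hypExt a b c z = hyp a b c z := if_neg hz.not_gt

lemma hypExt_eq_pfaffTransform (hc : ∀ m : ℕ, c ≠ -(m : ℝ)) (hz : z < 1 / 2) :
    hypExt a b c z = pfaffTransform a (hyp a (c - b) c) z := by
  rcases lt_or_ge z 0 with hz0 | hz0
  · exact if_pos hz0
  · rw [hypExt_of_nonneg hz0, hyp_eq_pfaffTransform hc (by linarith) hz]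

lemma analyticAt_hypExt (hc : ∀ m : ℕ, c ≠ -(m : ℝ)) (hz : z < 1) :
    AnalyticAt ℝ (hypExt a b c) z := by
  rcases lt_or_ge z (1 / 2) with hz2 | hz2
  · refine (analyticAt_pfaffTransform (a := a) (h := hyp a (c - b) c) hz
      (analyticAt_hyp _ _ _ (abs_div_sub_one_lt_one hz2))).congr ?_
    filter_upwards [eventually_lt_nhds hz2] with w hw
    exact (hypExt_eq_pfaffTransform hc hw).symm
  · have hz0 : 0 < z := by linarith
    refine (analyticAt_hyp a b c (abs_lt.2 ⟨by linarith, hz⟩)).congr ?_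
    filter_upwards [eventually_gt_nhds hz0] with w hw
    exact (hypExt_of_nonneg hw.le).symm

end PfaffTransformation

section PartialDerivatives

variable {E : Type*} [NormedAddCommGroup E] [NormedSpace ℝ E]

/-- The derivative of `F` in the direction `v`, as an operator on functions of the base point. -/
def dirDeriv (v : E) (F : E → ℝ) (p : E) : ℝ := fderiv ℝ F p v

/-- The partial derivative in the first of two real variables. -/
abbrev partialX : (ℝ × ℝ → ℝ) → ℝ × ℝ → ℝ := dirDeriv (1, 0)

/-- The partial derivative in the second of two real variables. -/
abbrev partialT : (ℝ × ℝ → ℝ) → ℝ × ℝ → ℝ := dirDeriv (0, 1)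

lemma analyticAt_dirDeriv {F : E → ℝ} {p : E} (v : E) (hF : AnalyticAt ℝ F p) :
    AnalyticAt ℝ (dirDeriv v F) p :=
  ((ContinuousLinearMap.apply ℝ ℝ v).analyticAt _).fun_comp hF.fderiv

lemma analyticAt_iterate_dirDeriv {F : E → ℝ} {p : E} (v : E) (hF : AnalyticAt ℝ F p) (n : ℕ) :
    AnalyticAt ℝ ((dirDeriv v)^[n] F) p :=
  Function.Iterate.rec (fun G => AnalyticAt ℝ G p) hF (fun _ => analyticAt_dirDeriv v) n

lemma dirDeriv_congr {F G : E → ℝ} {p : E} (v : E) (h : F =ᶠ[𝓝 p] G) :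
    dirDeriv v F p = dirDeriv v G p := by
  rw [dirDeriv, dirDeriv, h.fderiv_eq]

lemma dirDeriv_comm {F : E → ℝ} {p : E} (v w : E) (hF : AnalyticAt ℝ F p) :
    dirDeriv v (dirDeriv w F) p = dirDeriv w (dirDeriv v F) p := by
  have hsecond (v w : E) : dirDeriv v (dirDeriv w F) p = fderiv ℝ (fderiv ℝ F) p v w := by
    have h := hF.fderiv.differentiableAt.hasFDerivAt.clm_apply (hasFDerivAt_const w p)
    have h' : fderiv ℝ (dirDeriv w F) p = _ := h.fderiv
    simp [dirDeriv, h']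
  have hsymm : IsSymmSndFDerivAt ℝ F p :=
    (hF.contDiffAt (n := ⊤)).isSymmSndFDerivAt (by simp)
  rw [hsecond, hsecond, hsymm v w]

variable {F : ℝ × ℝ → ℝ} {x t : ℝ}

lemma hasDerivAt_partialX (hF : DifferentiableAt ℝ F (x, t)) :
    HasDerivAt (fun y => F (y, t)) (partialX F (x, t)) x :=
  hF.hasFDerivAt.comp_hasDerivAt x ((hasDerivAt_id x).prodMk (hasDerivAt_const x t))

lemma hasDerivAt_partialT (hF : DifferentiableAt ℝ F (x, t)) :
    HasDerivAt (fun τ => F (x, τ)) (partialT F (x, t)) t :=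
  hF.hasFDerivAt.comp_hasDerivAt t ((hasDerivAt_const t x).prodMk (hasDerivAt_id t))

lemma iterate_partialT_eq_iteratedDeriv (hF : AnalyticAt ℝ F (x, t)) (n : ℕ) :
    partialT^[n] F (x, t) = iteratedDeriv n (fun τ => F (x, τ)) t := by
  induction n generalizing F with
  | zero => simp
  | succ n ih =>
    rw [Function.iterate_succ_apply, ih (analyticAt_dirDeriv _ hF), iteratedDeriv_succ']
    apply Filter.EventuallyEq.iteratedDeriv_eq
    have hslice : ContinuousAt (fun τ : ℝ => (x, τ)) t := by fun_prop
    filter_upwards [hslice.eventually hF.eventually_analyticAt] with τ hτ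
    exact (hasDerivAt_partialT hτ.differentiableAt).deriv.symm

end PartialDerivatives

section LadderOperator

/-- The operator obtained from `hypOp a b c`, acting in the first variable `x`, by replacing the
parameters `a` and `b` by `a + θ` and `b - θ`, where `θ = t ∂/∂t` acts in the second variable. It
annihilates the functions `∑ uₙ F(a + n, b - n; c; x) tⁿ`. -/
def ladderOp (a b c : ℝ) (F : ℝ × ℝ → ℝ) (p : ℝ × ℝ) : ℝ :=
  p.1 * (1 - p.1) * partialX (partialX F) p + (c - (a + b + 1) * p.1) * partialX F p
    + p.2 ^ 2 * partialT (partialT F) p + (a - b + 1) * p.2 * partialT F p - a * b * F p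

variable {a b c x : ℝ} {F : ℝ × ℝ → ℝ} {p : ℝ × ℝ}

lemma analyticAt_ladderOp (hF : AnalyticAt ℝ F p) : AnalyticAt ℝ (ladderOp a b c F) p := by
  have hx := analyticAt_dirDeriv (1, 0) hF
  have hxx := analyticAt_dirDeriv (1, 0) hx
  have ht := analyticAt_dirDeriv (0, 1) hF
  have htt := analyticAt_dirDeriv (0, 1) ht
  have hfst : AnalyticAt ℝ (fun p : ℝ × ℝ => p.1) p := analyticAt_fst
  have hsnd : AnalyticAt ℝ (fun p : ℝ × ℝ => p.2) p := analyticAt_snd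
  unfold ladderOp
  fun_prop

lemma partialT_ladderOp (hF : AnalyticAt ℝ F p) :
    partialT (ladderOp a b c F) p = ladderOp (a + 1) (b - 1) c (partialT F) p := by
  obtain ⟨x, t⟩ := p
  have hFx := analyticAt_dirDeriv (1, 0) hF
  have hFt := analyticAt_dirDeriv (0, 1) hF
  have hxt : partialT (partialX F) (x, t) = partialX (partialT F) (x, t) := dirDeriv_comm _ _ hF
  have hxxt : partialT (partialX (partialX F)) (x, t) = partialX (partialX (partialT F)) (x, t) :=
    (dirDeriv_comm _ _ hFx).trans (dirDeriv_congr _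
      (hF.eventually_analyticAt.mono fun _ hq => dirDeriv_comm _ _ hq))
  have hid := hasDerivAt_id' t
  have d := hasDerivAt_partialT hF.differentiableAt
  have dx := hasDerivAt_partialT hFx.differentiableAt
  have dxx := hasDerivAt_partialT (analyticAt_dirDeriv (1, 0) hFx).differentiableAt
  have dt := hasDerivAt_partialT hFt.differentiableAt
  have dtt := hasDerivAt_partialT (analyticAt_dirDeriv (0, 1) hFt).differentiableAt
  have dop := hasDerivAt_partialT
    (analyticAt_ladderOp (a := a) (b := b) (c := c) hF).differentiableAt
  have hderiv := (((((dxx.const_mul (x * (1 - x))).add (dx.const_mul (c - (a + b + 1) * x))).add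
    ((hid.fun_pow 2).fun_mul dtt)).add ((hid.const_mul (a - b + 1)).fun_mul dt)).sub
    (d.const_mul (a * b)))
  rw [dop.unique hderiv, hxt, hxxt]
  simp only [ladderOp]
  ring

lemma ladderOp_iterate_partialT_eventuallyEq_zero (hF : AnalyticAt ℝ F p)
    (hop : ladderOp a b c F =ᶠ[𝓝 p] 0) (n : ℕ) :
    ladderOp (a + n) (b - n) c (partialT^[n] F) =ᶠ[𝓝 p] 0 := by
  induction n with
  | zero => simpa using hop
  | succ n ih =>
    rw [Function.iterate_succ_apply']
    filter_upwards [(analyticAt_iterate_dirDeriv (0, 1) hF n).eventually_analyticAt,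
      ih.eventuallyEq_nhds] with q hq hop
    push_cast
    rw [← add_assoc, ← sub_sub, ← partialT_ladderOp hq]
    exact (dirDeriv_congr _ hop).trans (by simp [dirDeriv])

lemma hypOp_slice_zero (hF : AnalyticAt ℝ F (x, 0)) :
    hypOp a b c (fun y => F (y, 0)) x = ladderOp a b c F (x, 0) := by
  have hslice : ContinuousAt (fun y : ℝ => (y, (0 : ℝ))) x := by fun_prop
  have hderiv : deriv (fun y => F (y, 0)) =ᶠ[𝓝 x] fun y => partialX F (y, 0) := by
    filter_upwards [hslice.eventually hF.eventually_analyticAt] with y hy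
    exact (hasDerivAt_partialX hy.differentiableAt).deriv
  rw [hypOp, hderiv.deriv_eq, hderiv.eq_of_nhds,
    (hasDerivAt_partialX (analyticAt_dirDeriv _ hF).differentiableAt).deriv]
  simp [ladderOp]

lemma iteratedDeriv_eq_mul_hyp_of_ladderOp_eq_zero (hc : ∀ m : ℕ, c ≠ -(m : ℝ))
    (hF : ∀ y : ℝ, |y| < 1 → AnalyticAt ℝ F (y, 0))
    (hop : ladderOp a b c F =ᶠ[𝓝 (0, 0)] 0) (n : ℕ) (hx : |x| < 1) :
    iteratedDeriv n (fun t => F (x, t)) 0 =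
      iteratedDeriv n (fun t => F (0, t)) 0 * hyp (a + n) (b - n) c x := by
  have hF0 := hF 0 (by simp)
  have hFn (y : ℝ) (hy : |y| < 1) := analyticAt_iterate_dirDeriv (0, 1) (hF y hy) n
  have hslice : ContinuousAt (fun y : ℝ => (y, (0 : ℝ))) 0 := by fun_prop
  have hode : hypOp (a + n) (b - n) c (fun y => partialT^[n] F (y, 0)) =ᶠ[𝓝 0] 0 := by
    filter_upwards [hslice.eventually (ladderOp_iterate_partialT_eventuallyEq_zero hF0 hop n),
      hslice.eventually (hFn 0 (by simp)).eventually_analyticAt] with y hy han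
    rw [hypOp_slice_zero han, hy]
    rfl
  rw [← iterate_partialT_eq_iteratedDeriv (hF x hx), ← iterate_partialT_eq_iteratedDeriv hF0]
  exact eq_hyp_of_hypOp_eq_zero hc Metric.isPreconnected_ball subset_rfl (by simp)
    (fun y hy => (hFn y (by simpa using hy)).fun_comp_of_eq (by fun_prop) rfl) hode
    (by simpa using hx)

end LadderOperator

section SeparatingCoordinates

/-- The discriminant `(1 + t)² - 4 x t` of the quadratic equation `δ (1 + t - t δ) = x`. -/
def genDisc (p : ℝ × ℝ) : ℝ := (1 + p.2) ^ 2 - 4 * p.1 * p.2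

/-- The root `δ` of `δ (1 + t - t δ) = x`, rationalised so that it is also defined, and analytic,
at `t = 0`. -/
def genDelta (p : ℝ × ℝ) : ℝ := 2 * p.1 / (1 + p.2 + √(genDisc p))

/-- The second separating coordinate `w = -t / (1 - t δ)`. -/
def genW (p : ℝ × ℝ) : ℝ := -p.2 / (1 - p.2 * genDelta p)

/-- The domain on which `(δ, w)` is an analytic change of the variables `(x, t)`. -/
def genDomain : Set (ℝ × ℝ) := {p | |p.2| < 1 ∧ 0 < genDisc p}

variable {x t : ℝ} {p : ℝ × ℝ}

lemma isOpen_genDomain : IsOpen genDomain := by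
  have hdisc : Continuous genDisc := by
    unfold genDisc
    fun_prop
  exact (isOpen_lt continuous_snd.abs continuous_const).inter (isOpen_lt continuous_const hdisc)

lemma mk_zero_mem_genDomain (x : ℝ) : (x, 0) ∈ genDomain := by simp [genDomain, genDisc]

lemma mk_mem_genDomain (hx0 : 0 < x) (hx1 : x < 1) (ht : |t| < 1) : (x, t) ∈ genDomain := by
  refine ⟨ht, ?_⟩
  obtain ⟨ht0, ht1⟩ := abs_lt.1 ht
  simp only [genDisc]
  rcases le_or_gt t 0 with h | h
  · nlinarith [mul_nonneg hx0.le (neg_nonneg.2 h), sq_pos_of_pos (by linarith : 0 < 1 + t)]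
  · nlinarith [sq_pos_of_pos (sub_pos.2 ht1), mul_pos h (sub_pos.2 hx1)]

lemma genDelta_mk_zero (x : ℝ) : genDelta (x, 0) = x := by
  norm_num [genDelta, genDisc]

lemma genW_mk_zero (x : ℝ) : genW (x, 0) = 0 := by simp [genW]

lemma sqrt_genDisc_pos (hp : p ∈ genDomain) : 0 < √(genDisc p) := Real.sqrt_pos.2 hp.2

lemma one_add_add_sqrt_genDisc_pos (hp : p ∈ genDomain) : 0 < 1 + p.2 + √(genDisc p) := by
  linarith [sqrt_genDisc_pos hp, (abs_lt.1 hp.1).1]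

lemma sqrt_genDisc_eq (hp : p ∈ genDomain) :
    √(genDisc p) = 1 + p.2 - 2 * (p.2 * genDelta p) := by
  have hpos := one_add_add_sqrt_genDisc_pos hp
  have hsq : √(genDisc p) ^ 2 = (1 + p.2) ^ 2 - 4 * p.1 * p.2 := Real.sq_sqrt hp.2.le
  rw [genDelta]
  field_simp
  linear_combination hsq

lemma genDelta_mul (hp : p ∈ genDomain) :
    genDelta p * (1 + p.2 - p.2 * genDelta p) = p.1 := by
  have hpos := one_add_add_sqrt_genDisc_pos hp
  have hsum : 1 + p.2 - p.2 * genDelta p = (1 + p.2 + √(genDisc p)) / 2 := by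
    rw [sqrt_genDisc_eq hp]
    ring
  rw [hsum, genDelta]
  field_simp

lemma one_sub_mul_genDelta_pos (hp : p ∈ genDomain) : 0 < 1 - p.2 * genDelta p := by
  linarith [sqrt_genDisc_eq hp, sqrt_genDisc_pos hp, (abs_lt.1 hp.1).2]

lemma one_sub_genDelta_mul_genW (hp : p ∈ genDomain) :
    1 - genDelta p * genW p = (1 - p.2 * genDelta p)⁻¹ := by
  have hpos : 1 - genDelta p * p.2 ≠ 0 := by
    simpa only [mul_comm] using (one_sub_mul_genDelta_pos hp).ne'
  rw [genW]
  field_simp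
  ring

lemma one_sub_genDelta_mul_genW_pos (hp : p ∈ genDomain) : 0 < 1 - genDelta p * genW p := by
  rw [one_sub_genDelta_mul_genW hp]
  exact inv_pos.2 (one_sub_mul_genDelta_pos hp)

lemma snd_eq_of_mem_genDomain (hp : p ∈ genDomain) :
    p.2 = -genW p / (1 - genDelta p * genW p) := by
  have hpos := one_sub_mul_genDelta_pos hp
  rw [one_sub_genDelta_mul_genW hp, genW]
  field_simp

lemma fst_eq_of_mem_genDomain (hp : p ∈ genDomain) :
    p.1 = genDelta p * (1 - genW p) / (1 - genDelta p * genW p) := by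
  have hpos : 1 - genDelta p * p.2 ≠ 0 := by
    simpa only [mul_comm] using (one_sub_mul_genDelta_pos hp).ne'
  rw [one_sub_genDelta_mul_genW hp, genW, ← genDelta_mul hp]
  field_simp
  ring

lemma sqrt_genDisc_eq_div (hp : p ∈ genDomain) :
    √(genDisc p) = (1 - genW p + genDelta p * genW p) / (1 - genDelta p * genW p) := by
  have hpos := one_sub_mul_genDelta_pos hp
  rw [one_sub_genDelta_mul_genW hp, sqrt_genDisc_eq hp, genW]
  field_simp
  ring

lemma analyticAt_genDelta (hp : p ∈ genDomain) : AnalyticAt ℝ genDelta p := by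
  have hfst : AnalyticAt ℝ (fun p : ℝ × ℝ => p.1) p := analyticAt_fst
  have hsnd : AnalyticAt ℝ (fun p : ℝ × ℝ => p.2) p := analyticAt_snd
  have hsqrt := analyticAt_sqrt (f := genDisc) (by unfold genDisc; fun_prop) hp.2
  have hne := (one_add_add_sqrt_genDisc_pos hp).ne'
  exact AnalyticAt.fun_div (by fun_prop) (by fun_prop) hne

lemma analyticAt_genW (hp : p ∈ genDomain) : AnalyticAt ℝ genW p := by
  have hsnd : AnalyticAt ℝ (fun p : ℝ × ℝ => p.2) p := analyticAt_snd
  have hdelta := analyticAt_genDelta hp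
  exact AnalyticAt.fun_div (by fun_prop) (by fun_prop) (one_sub_mul_genDelta_pos hp).ne'

lemma eventually_genDelta_genW (hp : p ∈ genDomain) {P Q : ℝ → Prop}
    (hP : ∀ᶠ s in 𝓝 (genDelta p), P s) (hQ : ∀ᶠ w in 𝓝 (genW p), Q w) :
    ∀ᶠ q in 𝓝 p, q ∈ genDomain ∧ P (genDelta q) ∧ Q (genW q) :=
  (isOpen_genDomain.eventually_mem hp).and <|
    ((analyticAt_genDelta hp).continuousAt.eventually hP).and
      ((analyticAt_genW hp).continuousAt.eventually hQ)

lemma hasDerivAt_genDelta_left (hp : (x, t) ∈ genDomain) :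
    HasDerivAt (fun y => genDelta (y, t)) (√(genDisc (x, t)))⁻¹ x := by
  have hdelta := hasDerivAt_partialX (analyticAt_genDelta hp).differentiableAt
  have hprod := hdelta.fun_mul ((hdelta.const_mul t).const_sub (1 + t))
  have hslice : ContinuousAt (fun y : ℝ => (y, t)) x := by fun_prop
  have hfst : HasDerivAt (fun y => genDelta (y, t) * (1 + t - t * genDelta (y, t))) 1 x :=
    (hasDerivAt_id' x).congr_of_eventuallyEq <|
      (hslice.eventually (isOpen_genDomain.eventually_mem hp)).mono fun _ hq => genDelta_mul hq
  refine hdelta.congr_deriv (eq_inv_of_mul_eq_one_left ?_)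
  rw [sqrt_genDisc_eq hp]
  linear_combination hprod.unique hfst

lemma hasDerivAt_genDelta_right (hp : (x, t) ∈ genDomain) :
    HasDerivAt (fun τ => genDelta (x, τ))
      (-(genDelta (x, t) * (1 - genDelta (x, t))) / √(genDisc (x, t))) t := by
  have hdelta := hasDerivAt_partialT (analyticAt_genDelta hp).differentiableAt
  have hid := hasDerivAt_id' t
  have hprod := hdelta.fun_mul ((hid.const_add 1).fun_sub (hid.fun_mul hdelta))
  have hslice : ContinuousAt (fun τ : ℝ => (x, τ)) t := by fun_prop
  have hconst : HasDerivAt (fun τ => genDelta (x, τ) * (1 + τ - τ * genDelta (x, τ))) 0 t :=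
    (hasDerivAt_const t x).congr_of_eventuallyEq <|
      (hslice.eventually (isOpen_genDomain.eventually_mem hp)).mono fun _ hq => genDelta_mul hq
  refine hdelta.congr_deriv ((eq_div_iff (sqrt_genDisc_pos hp).ne').2 ?_)
  rw [sqrt_genDisc_eq hp]
  linear_combination hprod.unique hconst

lemma hasDerivAt_one_sub_mul_genDelta_left (hp : (x, t) ∈ genDomain) :
    HasDerivAt (fun y => 1 - t * genDelta (y, t)) (-t / √(genDisc (x, t))) x :=
  (((hasDerivAt_genDelta_left hp).const_mul t).const_sub 1).congr_deriv (by ring)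

lemma hasDerivAt_one_sub_mul_genDelta_right (hp : (x, t) ∈ genDomain) :
    HasDerivAt (fun τ => 1 - τ * genDelta (x, τ))
      (-(genDelta (x, t) * (1 - t * genDelta (x, t))) / √(genDisc (x, t))) t := by
  refine (((hasDerivAt_id' t).fun_mul (hasDerivAt_genDelta_right hp)).const_sub 1).congr_deriv ?_
  have hsqrt := sqrt_genDisc_pos hp
  field_simp
  linear_combination -genDelta (x, t) * sqrt_genDisc_eq hp

lemma hasDerivAt_genW_left (hp : (x, t) ∈ genDomain) :
    HasDerivAt (fun y => genW (y, t)) (-genW (x, t) ^ 2 / √(genDisc (x, t))) x := by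
  have hpos := (one_sub_mul_genDelta_pos hp).ne'
  refine ((hasDerivAt_const x (-t)).fun_div
    (hasDerivAt_one_sub_mul_genDelta_left hp) hpos).congr_deriv ?_
  simp only [genW] at hpos ⊢
  field_simp
  ring

lemma hasDerivAt_genW_right (hp : (x, t) ∈ genDomain) :
    HasDerivAt (fun τ => genW (x, τ)) (-(1 - genW (x, t)) / √(genDisc (x, t))) t := by
  have hpos := (one_sub_mul_genDelta_pos hp).ne'
  have hsqrt := sqrt_genDisc_pos hp
  refine ((hasDerivAt_neg t).fun_div
    (hasDerivAt_one_sub_mul_genDelta_right hp) hpos).congr_deriv ?_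
  have hsqrt_eq := sqrt_genDisc_eq hp
  simp only [genW] at hpos hsqrt_eq ⊢
  field_simp
  linear_combination -hsqrt_eq

lemma hasDerivAt_inv_sqrt_genDisc_left (hp : (x, t) ∈ genDomain) :
    HasDerivAt (fun y => (√(genDisc (y, t)))⁻¹) (2 * t / √(genDisc (x, t)) ^ 3) x := by
  have hdisc : HasDerivAt (fun y => genDisc (y, t)) (-(4 * t)) x :=
    ((((hasDerivAt_id' x).const_mul 4).mul_const t).const_sub ((1 + t) ^ 2)).congr_deriv (by ring)
  refine ((hdisc.sqrt hp.2.ne').fun_inv (sqrt_genDisc_pos hp).ne').congr_deriv ?_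
  have hsqrt := sqrt_genDisc_pos hp
  field_simp
  ring

lemma hasDerivAt_inv_sqrt_genDisc_right (hp : (x, t) ∈ genDomain) :
    HasDerivAt (fun τ => (√(genDisc (x, τ)))⁻¹) (-(1 + t - 2 * x) / √(genDisc (x, t)) ^ 3) t := by
  have hid := hasDerivAt_id' t
  have hdisc : HasDerivAt (fun τ => genDisc (x, τ)) (2 * (1 + t) - 4 * x) t :=
    (((hid.const_add 1).fun_pow 2).fun_sub (hid.const_mul (4 * x))).congr_deriv (by norm_num)
  refine ((hdisc.sqrt hp.2.ne').fun_inv (sqrt_genDisc_pos hp).ne').congr_deriv ?_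
  have hsqrt := sqrt_genDisc_pos hp
  field_simp
  ring

end SeparatingCoordinates

section SeparatedProducts

/-- The function `(1 - t δ)⁻ᴬ f(δ) g(w)`, which `ladderOp A B C` separates into an operator acting
on `f` and an operator acting on `g`. -/
def sepProd (A : ℝ) (f g : ℝ → ℝ) (p : ℝ × ℝ) : ℝ :=
  (1 - p.2 * genDelta p) ^ (-A) * f (genDelta p) * g (genW p)

/-- The first-order operator by which `R ∂/∂x`, where `R = √(genDisc p)`, acts on the factor `g(w)`
of a separated product, up to sign. -/
def sepOpXRight (A : ℝ) (g : ℝ → ℝ) (w : ℝ) : ℝ := w ^ 2 * deriv g w + A * w * g w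

/-- The first-order operator by which `R ∂/∂t`, where `R = √(genDisc p)`, acts on the factor `f(δ)`
of a separated product. -/
def sepOpTLeft (A : ℝ) (f : ℝ → ℝ) (s : ℝ) : ℝ := A * s * f s - s * (1 - s) * deriv f s

/-- The first-order operator by which `R ∂/∂t`, where `R = √(genDisc p)`, acts on the factor `g(w)`
of a separated product, up to sign. -/
def sepOpTRight (g : ℝ → ℝ) (w : ℝ) : ℝ := (1 - w) * deriv g w

variable {A B C x t : ℝ} {f g : ℝ → ℝ} {p : ℝ × ℝ}

lemma analyticAt_sepProd (hp : p ∈ genDomain) (hf : AnalyticAt ℝ f (genDelta p))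
    (hg : AnalyticAt ℝ g (genW p)) : AnalyticAt ℝ (sepProd A f g) p := by
  have hsnd : AnalyticAt ℝ (fun p : ℝ × ℝ => p.2) p := analyticAt_snd
  have hdelta := analyticAt_genDelta hp
  have hpow := analyticAt_rpow_const (f := fun p => 1 - p.2 * genDelta p) (by fun_prop)
    (one_sub_mul_genDelta_pos hp) (-A)
  exact (hpow.fun_mul (hf.fun_comp hdelta)).fun_mul (hg.fun_comp (analyticAt_genW hp))

lemma partialX_sepProd (hp : p ∈ genDomain) (hf : AnalyticAt ℝ f (genDelta p))
    (hg : AnalyticAt ℝ g (genW p)) :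
    partialX (sepProd A f g) p =
      (√(genDisc p))⁻¹ * (sepProd A (deriv f) g p - sepProd A f (sepOpXRight A g) p) := by
  obtain ⟨x, t⟩ := p
  have hU := one_sub_mul_genDelta_pos hp
  have hpow := (hasDerivAt_one_sub_mul_genDelta_left hp).rpow_const (p := -A) (.inl hU.ne')
  have hprod := (hpow.fun_mul
    (hf.differentiableAt.hasDerivAt.comp x (hasDerivAt_genDelta_left hp))).fun_mul
    (hg.differentiableAt.hasDerivAt.comp x (hasDerivAt_genW_left hp))
  rw [(hasDerivAt_partialX (analyticAt_sepProd hp hf hg).differentiableAt).unique hprod]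
  simp only [sepProd, sepOpXRight, Function.comp_apply, Real.rpow_sub_one hU.ne']
  simp only [genW] at hU ⊢
  field_simp
  ring

lemma partialT_sepProd (hp : p ∈ genDomain) (hf : AnalyticAt ℝ f (genDelta p))
    (hg : AnalyticAt ℝ g (genW p)) :
    partialT (sepProd A f g) p =
      (√(genDisc p))⁻¹ * (sepProd A (sepOpTLeft A f) g p - sepProd A f (sepOpTRight g) p) := by
  obtain ⟨x, t⟩ := p
  have hU : 1 - t * genDelta (x, t) ≠ 0 := (one_sub_mul_genDelta_pos hp).ne'
  have hpow := (hasDerivAt_one_sub_mul_genDelta_right hp).rpow_const (p := -A) (.inl hU)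
  have hprod := (hpow.fun_mul
    (hf.differentiableAt.hasDerivAt.comp t (hasDerivAt_genDelta_right hp))).fun_mul
    (hg.differentiableAt.hasDerivAt.comp t (hasDerivAt_genW_right hp))
  rw [(hasDerivAt_partialT (analyticAt_sepProd hp hf hg).differentiableAt).unique hprod]
  simp only [sepProd, sepOpTLeft, sepOpTRight, Function.comp_apply, Real.rpow_sub_one hU]
  rw [mul_comm t] at hU ⊢
  field_simp
  ring

lemma analyticAt_sepOpXRight {w : ℝ} (hg : AnalyticAt ℝ g w) :
    AnalyticAt ℝ (sepOpXRight A g) w := by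
  have := hg.deriv
  unfold sepOpXRight
  fun_prop

lemma analyticAt_sepOpTLeft {s : ℝ} (hf : AnalyticAt ℝ f s) :
    AnalyticAt ℝ (sepOpTLeft A f) s := by
  have := hf.deriv
  unfold sepOpTLeft
  fun_prop

lemma analyticAt_sepOpTRight {w : ℝ} (hg : AnalyticAt ℝ g w) :
    AnalyticAt ℝ (sepOpTRight g) w := by
  have := hg.deriv
  unfold sepOpTRight
  fun_prop

lemma sepOpXRight_sepOpXRight {w : ℝ} (hg : AnalyticAt ℝ g w) :
    sepOpXRight A (sepOpXRight A g) w =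
      w ^ 4 * deriv (deriv g) w + 2 * (A + 1) * w ^ 3 * deriv g w + A * (A + 1) * w ^ 2 * g w := by
  have hid := hasDerivAt_id' w
  have hderiv : HasDerivAt (sepOpXRight A g) _ w :=
    ((hid.fun_pow 2).fun_mul hg.deriv.differentiableAt.hasDerivAt).fun_add
      ((hid.const_mul A).fun_mul hg.differentiableAt.hasDerivAt)
  rw [sepOpXRight, hderiv.deriv, sepOpXRight]
  push_cast
  ring

lemma sepOpTLeft_sepOpTLeft {s : ℝ} (hf : AnalyticAt ℝ f s) :
    sepOpTLeft A (sepOpTLeft A f) s =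
      (s * (1 - s)) ^ 2 * deriv (deriv f) s - s * (1 - s) * (2 * (A + 1) * s - 1) * deriv f s +
        A * s * ((A + 1) * s - 1) * f s := by
  have hid := hasDerivAt_id' s
  have hderiv : HasDerivAt (sepOpTLeft A f) _ s :=
    ((hid.const_mul A).fun_mul hf.differentiableAt.hasDerivAt).fun_sub
      ((hid.fun_mul (hid.const_sub 1)).fun_mul hf.deriv.differentiableAt.hasDerivAt)
  rw [sepOpTLeft, hderiv.deriv, sepOpTLeft]
  ring

lemma sepOpTRight_sepOpTRight {w : ℝ} (hg : AnalyticAt ℝ g w) :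
    sepOpTRight (sepOpTRight g) w = (1 - w) ^ 2 * deriv (deriv g) w - (1 - w) * deriv g w := by
  have hderiv : HasDerivAt (sepOpTRight g) _ w :=
    ((hasDerivAt_id' w).const_sub 1).fun_mul hg.deriv.differentiableAt.hasDerivAt
  rw [sepOpTRight, hderiv.deriv]
  ring

lemma partialX_partialX_sepProd (hp : p ∈ genDomain) (hf : AnalyticAt ℝ f (genDelta p))
    (hg : AnalyticAt ℝ g (genW p)) :
    partialX (partialX (sepProd A f g)) p =
      2 * p.2 / √(genDisc p) ^ 3 *
          (sepProd A (deriv f) g p - sepProd A f (sepOpXRight A g) p) +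
        (√(genDisc p) ^ 2)⁻¹ *
          (sepProd A (deriv (deriv f)) g p - 2 * sepProd A (deriv f) (sepOpXRight A g) p +
            sepProd A f (sepOpXRight A (sepOpXRight A g)) p) := by
  obtain ⟨x, t⟩ := p
  have hg' : AnalyticAt ℝ (sepOpXRight A g) (genW (x, t)) := analyticAt_sepOpXRight hg
  have hslice : ContinuousAt (fun y : ℝ => (y, t)) x := by fun_prop
  have hfirst : (fun y => partialX (sepProd A f g) (y, t)) =ᶠ[𝓝 x] fun y =>
      (√(genDisc (y, t)))⁻¹ *
        (sepProd A (deriv f) g (y, t) - sepProd A f (sepOpXRight A g) (y, t)) :=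
    (hslice.eventually (eventually_genDelta_genW hp hf.eventually_analyticAt
      hg.eventually_analyticAt)).mono
      fun _ hq => partialX_sepProd hq.1 hq.2.1 hq.2.2
  have hright := (hasDerivAt_inv_sqrt_genDisc_left hp).fun_mul
    ((hasDerivAt_partialX (analyticAt_sepProd (A := A) hp hf.deriv hg).differentiableAt).fun_sub
      (hasDerivAt_partialX (analyticAt_sepProd (A := A) hp hf hg').differentiableAt))
  have hleft := hasDerivAt_partialX
    (analyticAt_dirDeriv (1, 0) (analyticAt_sepProd (A := A) hp hf hg)).differentiableAt
  rw [hleft.unique (hright.congr_of_eventuallyEq hfirst), partialX_sepProd hp hf.deriv hg,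
    partialX_sepProd hp hf hg']
  ring

lemma partialT_partialT_sepProd (hp : p ∈ genDomain) (hf : AnalyticAt ℝ f (genDelta p))
    (hg : AnalyticAt ℝ g (genW p)) :
    partialT (partialT (sepProd A f g)) p =
      -(1 + p.2 - 2 * p.1) / √(genDisc p) ^ 3 *
          (sepProd A (sepOpTLeft A f) g p - sepProd A f (sepOpTRight g) p) +
        (√(genDisc p) ^ 2)⁻¹ *
          (sepProd A (sepOpTLeft A (sepOpTLeft A f)) g p -
            2 * sepProd A (sepOpTLeft A f) (sepOpTRight g) p +
            sepProd A f (sepOpTRight (sepOpTRight g)) p) := by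
  obtain ⟨x, t⟩ := p
  have hf' : AnalyticAt ℝ (sepOpTLeft A f) (genDelta (x, t)) := analyticAt_sepOpTLeft hf
  have hg' : AnalyticAt ℝ (sepOpTRight g) (genW (x, t)) := analyticAt_sepOpTRight hg
  have hslice : ContinuousAt (fun τ : ℝ => (x, τ)) t := by fun_prop
  have hfirst : (fun τ => partialT (sepProd A f g) (x, τ)) =ᶠ[𝓝 t] fun τ =>
      (√(genDisc (x, τ)))⁻¹ *
        (sepProd A (sepOpTLeft A f) g (x, τ) - sepProd A f (sepOpTRight g) (x, τ)) :=
    (hslice.eventually (eventually_genDelta_genW hp hf.eventually_analyticAt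
      hg.eventually_analyticAt)).mono
      fun _ hq => partialT_sepProd hq.1 hq.2.1 hq.2.2
  have hright := (hasDerivAt_inv_sqrt_genDisc_right hp).fun_mul
    ((hasDerivAt_partialT (analyticAt_sepProd (A := A) hp hf' hg).differentiableAt).fun_sub
      (hasDerivAt_partialT (analyticAt_sepProd (A := A) hp hf hg').differentiableAt))
  have hleft := hasDerivAt_partialT
    (analyticAt_dirDeriv (0, 1) (analyticAt_sepProd (A := A) hp hf hg)).differentiableAt
  rw [hleft.unique (hright.congr_of_eventuallyEq hfirst), partialT_sepProd hp hf' hg,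
    partialT_sepProd hp hf hg']
  ring

lemma ladderOp_sepProd (hp : p ∈ genDomain) (hf : AnalyticAt ℝ f (genDelta p))
    (hg : AnalyticAt ℝ g (genW p)) :
    ladderOp A B C (sepProd A f g) p =
      (√(genDisc p))⁻¹ * (sepProd A (hypOp A B C f) g p +
        genW p * sepProd A f (hypOp A (C - B) (A - B + 1) g) p) := by
  have hR := sqrt_genDisc_pos hp
  have hden := one_sub_genDelta_mul_genW_pos hp
  have hR_eq := sqrt_genDisc_eq_div hp
  have hnum : 0 < 1 - genW p + genDelta p * genW p := by
    rwa [hR_eq, lt_div_iff₀ hden, zero_mul] at hR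
  rw [ladderOp, partialX_partialX_sepProd hp hf hg, partialT_partialT_sepProd hp hf hg,
    partialX_sepProd hp hf hg, partialT_sepProd hp hf hg]
  simp only [sepProd, hypOp, sepOpXRight_sepOpXRight hg, sepOpTLeft_sepOpTLeft hf,
    sepOpTRight_sepOpTRight hg]
  simp only [sepOpXRight, sepOpTLeft, sepOpTRight]
  generalize (1 - p.2 * genDelta p) ^ (-A) = u
  rw [hR_eq, fst_eq_of_mem_genDomain hp, snd_eq_of_mem_genDomain hp]
  have hden' := hden.ne'
  have hnum' := hnum.ne'
  field_simp
  ring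

end SeparatedProducts

section GeneratingFunction

/-- The separated product `(1 - t δ)⁻ᴬ F(A,B;C;δ) F(A,C-B;A-B+1;w)`, the generating function of the
solutions `F(A+n,B-n;C;x)` of the hypergeometric equation near `t = 0`. -/
def genFun (A B C : ℝ) : ℝ × ℝ → ℝ := sepProd A (hyp A B C) (hyp A (C - B) (A - B + 1))

/-- The closed form of the generating function in terms of the continued function `hypExt`. The
theorem is the case `A = α + c + 1`, `B = -β - c`, `C = 1 - β`. -/
def genClosedForm (A B C x t : ℝ) : ℝ :=
  genDelta (x, t) ^ A / (x ^ (C - B) * (x - t * genDelta (x, t)) ^ (A - (C - B)))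
    * hypExt B A C (genDelta (x, t))
    * hypExt (C - B) (1 - B) (A - B + 1) (t * genDelta (x, t) / x)

variable {A B C x t : ℝ} {p : ℝ × ℝ}

lemma analyticAt_genFun (hp : p ∈ genDomain) (hdelta : |genDelta p| < 1) (hw : |genW p| < 1) :
    AnalyticAt ℝ (genFun A B C) p :=
  analyticAt_sepProd hp (analyticAt_hyp _ _ _ hdelta) (analyticAt_hyp _ _ _ hw)

lemma analyticAt_genFun_mk_zero (hx : |x| < 1) : AnalyticAt ℝ (genFun A B C) (x, 0) :=
  analyticAt_genFun (mk_zero_mem_genDomain x) (by rwa [genDelta_mk_zero]) (by simp [genW_mk_zero])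

lemma ladderOp_genFun (hC : ∀ m : ℕ, C ≠ -(m : ℝ)) (hD : ∀ m : ℕ, A - B + 1 ≠ -(m : ℝ))
    (hp : p ∈ genDomain) (hdelta : |genDelta p| < 1) (hw : |genW p| < 1) :
    ladderOp A B C (genFun A B C) p = 0 := by
  rw [genFun, ladderOp_sepProd hp (analyticAt_hyp _ _ _ hdelta) (analyticAt_hyp _ _ _ hw)]
  simp [sepProd, hypOp_hyp hC hdelta, hypOp_hyp hD hw]

lemma iteratedDeriv_genFun_zero_left (n : ℕ) :
    iteratedDeriv n (fun t => genFun A B C (0, t)) 0 =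
      n.factorial * ((-1) ^ n * hypCoeff A (C - B) (A - B + 1) n) := by
  have hslice : (fun t => genFun A B C (0, t)) = fun t => hyp A (C - B) (A - B + 1) (-t) := by
    ext t
    simp [genFun, sepProd, genW, genDelta, hyp_zero]
  rw [hslice, iteratedDeriv_comp_neg, neg_zero, iteratedDeriv_hyp_zero, smul_eq_mul]
  ring

lemma iteratedDeriv_genFun (hC : ∀ m : ℕ, C ≠ -(m : ℝ)) (hD : ∀ m : ℕ, A - B + 1 ≠ -(m : ℝ))
    (hx : |x| < 1) (n : ℕ) :
    iteratedDeriv n (fun t => genFun A B C (x, t)) 0 =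
      n.factorial * ((-1) ^ n * hypCoeff A (C - B) (A - B + 1) n * hyp (A + n) (B - n) C x) := by
  have hop : ladderOp A B C (genFun A B C) =ᶠ[𝓝 (0, 0)] 0 :=
    (eventually_genDelta_genW (mk_zero_mem_genDomain 0)
      (continuous_abs.continuousAt.eventually_lt_const (by simp [genDelta_mk_zero]))
      (continuous_abs.continuousAt.eventually_lt_const (by simp [genW_mk_zero]))).mono
      fun q hq => ladderOp_genFun hC hD hq.1 hq.2.1 hq.2.2
  rw [iteratedDeriv_eq_mul_hyp_of_ladderOp_eq_zero hC (fun y hy => analyticAt_genFun_mk_zero hy)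
    hop n hx, iteratedDeriv_genFun_zero_left]
  ring

lemma genDelta_pos (hx0 : 0 < x) (hp : (x, t) ∈ genDomain) : 0 < genDelta (x, t) :=
  div_pos (by linarith) (one_add_add_sqrt_genDisc_pos hp)

lemma genDelta_lt_one (hx1 : x < 1) (hp : (x, t) ∈ genDomain) : genDelta (x, t) < 1 := by
  have hmul : (1 - genDelta (x, t)) * (1 - t * genDelta (x, t)) = 1 - x := by
    linear_combination -genDelta_mul hp
  have hpos : 0 < (1 - genDelta (x, t)) * (1 - t * genDelta (x, t)) := hmul ▸ sub_pos.2 hx1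
  exact sub_pos.1 (pos_of_mul_pos_left hpos (one_sub_mul_genDelta_pos hp).le)

lemma sub_mul_genDelta (hp : (x, t) ∈ genDomain) :
    x - t * genDelta (x, t) = genDelta (x, t) * (1 - t * genDelta (x, t)) := by
  linear_combination -genDelta_mul hp

lemma deltaF_eq_genDelta (hp : (x, t) ∈ genDomain) (ht : t ≠ 0) :
    deltaF x t = genDelta (x, t) := by
  have hsqrt : √((1 + t) ^ 2 - 4 * x * t) = 1 + t - 2 * (t * genDelta (x, t)) := sqrt_genDisc_eq hp
  rw [deltaF, hsqrt]
  field_simp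
  ring

lemma one_sub_mul_genDelta_div (hx0 : 0 < x) (hp : (x, t) ∈ genDomain) :
    1 - t * genDelta (x, t) / x = genDelta (x, t) * (1 - t * genDelta (x, t)) / x := by
  rw [← sub_mul_genDelta hp, sub_div, div_self hx0.ne']

lemma mul_genDelta_div_lt_one (hx0 : 0 < x) (hp : (x, t) ∈ genDomain) :
    t * genDelta (x, t) / x < 1 := by
  have hpos := div_pos (mul_pos (genDelta_pos hx0 hp) (one_sub_mul_genDelta_pos hp)) hx0
  linarith [one_sub_mul_genDelta_div hx0 hp]

lemma mul_genDelta_div_pfaff (hx0 : 0 < x) (hp : (x, t) ∈ genDomain) :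
    t * genDelta (x, t) / x / (t * genDelta (x, t) / x - 1) = genW (x, t) := by
  have hdelta := genDelta_pos hx0 hp
  have hpos := one_sub_mul_genDelta_pos hp
  rw [← neg_sub 1, one_sub_mul_genDelta_div hx0 hp, genW]
  field_simp

lemma analyticAt_genClosedForm (hC : ∀ m : ℕ, C ≠ -(m : ℝ))
    (hD : ∀ m : ℕ, A - B + 1 ≠ -(m : ℝ)) (hx0 : 0 < x) (hx1 : x < 1) (ht : |t| < 1) :
    AnalyticAt ℝ (genClosedForm A B C x) t := by
  have hp := mk_mem_genDomain hx0 hx1 ht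
  have hdelta : AnalyticAt ℝ (fun τ => genDelta (x, τ)) t :=
    (analyticAt_genDelta hp).fun_comp_of_eq (by fun_prop) rfl
  have hz : AnalyticAt ℝ (fun τ => τ * genDelta (x, τ) / x) t :=
    AnalyticAt.fun_div (by fun_prop) analyticAt_const hx0.ne'
  have hsub : 0 < x - t * genDelta (x, t) := by
    rw [sub_mul_genDelta hp]
    exact mul_pos (genDelta_pos hx0 hp) (one_sub_mul_genDelta_pos hp)
  have hpow := analyticAt_rpow_const hdelta (genDelta_pos hx0 hp) A
  have hpow_sub := analyticAt_rpow_const (f := fun τ => x - τ * genDelta (x, τ)) (by fun_prop)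
    hsub (A - (C - B))
  have hfirst := (analyticAt_hypExt (a := B) (b := A) hC
    (genDelta_lt_one hx1 hp)).fun_comp_of_eq hdelta rfl
  have hsecond := (analyticAt_hypExt (a := C - B) (b := 1 - B) hD
    (mul_genDelta_div_lt_one hx0 hp)).fun_comp_of_eq hz rfl
  have hden := (mul_pos (Real.rpow_pos_of_pos hx0 (C - B))
    (Real.rpow_pos_of_pos hsub (A - (C - B)))).ne'
  exact ((hpow.fun_div (analyticAt_const.fun_mul hpow_sub) hden).fun_mul hfirst).fun_mul hsecond

lemma rpow_div_mul_rpow_eq {x s u : ℝ} (hx : 0 < x) (hs : 0 < s) (hu : 0 < u) (a b : ℝ) :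
    s ^ a / (x ^ b * (s * u) ^ (a - b)) * (s * u / x) ^ (-b) = u ^ (-a) := by
  rw [Real.rpow_neg (by positivity), Real.rpow_neg hu.le, Real.div_rpow (by positivity) hx.le,
    Real.mul_rpow hs.le hu.le, Real.mul_rpow hs.le hu.le, Real.rpow_sub hs, Real.rpow_sub hu]
  field_simp

lemma genClosedForm_eq_genFun (hD : ∀ m : ℕ, A - B + 1 ≠ -(m : ℝ)) (hx0 : 0 < x)
    (hp : (x, t) ∈ genDomain) (hz : t * genDelta (x, t) / x < 1 / 2) :
    genClosedForm A B C x t = genFun A B C (x, t) := by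
  have hdelta := genDelta_pos hx0 hp
  rw [genClosedForm, hypExt_of_nonneg hdelta.le, hypExt_eq_pfaffTransform hD hz, pfaffTransform,
    mul_genDelta_div_pfaff hx0 hp, one_sub_mul_genDelta_div hx0 hp, sub_mul_genDelta hp, genFun,
    sepProd, ← rpow_div_mul_rpow_eq hx0 hdelta (one_sub_mul_genDelta_pos hp) A (C - B),
    hyp_comm B A, hyp_comm (C - B), show A - B + 1 - (1 - B) = A by ring]
  ring

lemma genClosedForm_eventuallyEq_genFun (hD : ∀ m : ℕ, A - B + 1 ≠ -(m : ℝ)) (hx0 : 0 < x) :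
    genClosedForm A B C x =ᶠ[𝓝 0] fun t => genFun A B C (x, t) := by
  have hp := mk_zero_mem_genDomain x
  have hslice : ContinuousAt (fun t : ℝ => (x, t)) 0 := by fun_prop
  have hdelta : ContinuousAt (fun t => genDelta (x, t)) 0 :=
    (analyticAt_genDelta hp).continuousAt.comp hslice
  have hz : ContinuousAt (fun t => t * genDelta (x, t) / x) 0 := by fun_prop
  filter_upwards [hslice.eventually (isOpen_genDomain.eventually_mem hp),
    hz.eventually (eventually_lt_nhds (b := 1 / 2) (by simp))] with t ht hz
  exact genClosedForm_eq_genFun hD hx0 ht hz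

lemma one_le_radius_genFun_coeff (A B D : ℝ) (hC : ∀ m : ℕ, C ≠ -(m : ℝ)) (hx0 : 0 ≤ x)
    (hx1 : x < 1) :
    1 ≤ (ofScalars ℝ fun n : ℕ =>
      hypCoeff A (C - B) D n * ((-1) ^ n * hyp (A + n) (B - n) C x)).radius := by
  obtain ⟨k, hk⟩ := exists_isBigO_hyp_add_sub_pow A B hC hx0 hx1
  have hsign : (fun n : ℕ => (-1) ^ n * hyp (A + n) (B - n) C x) =O[atTop] fun n => (n : ℝ) ^ k :=
    (isBigO_of_le _ (by simp)).trans hk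
  exact (one_le_radius_hypCoeff A (C - B) D).trans (radius_le_radius_mul_of_isBigO hsign)

lemma hasSum_genClosedForm (hC : ∀ m : ℕ, C ≠ -(m : ℝ)) (hD : ∀ m : ℕ, A - B + 1 ≠ -(m : ℝ))
    (hx0 : 0 < x) (hx1 : x < 1) (ht : |t| < 1) :
    HasSum (fun n : ℕ => hypCoeff A (C - B) (A - B + 1) n *
      ((-1) ^ n * hyp (A + n) (B - n) C x) * t ^ n) (genClosedForm A B C x t) := by
  have hx : |x| < 1 := by rwa [abs_of_pos hx0]
  refine hasSum_mul_pow_of_iteratedDeriv_eq (one_le_radius_genFun_coeff A B _ hC hx0.le hx1)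
    (fun τ hτ => analyticAt_genClosedForm hC hD hx0 hx1 (mem_eball_zero_one.1 hτ)) (fun n => ?_)
    (mem_eball_zero_one.2 ht)
  rw [(genClosedForm_eventuallyEq_genFun hD hx0).iteratedDeriv_eq, iteratedDeriv_genFun hC hD hx]
  ring

end GeneratingFunction

theorem Y_generating_function_general (α β c x t : ℝ)
    (h₁ : ∀ m : ℕ, 1 - β ≠ -(m : ℝ))
    (h₂ : ∀ m : ℕ, α + β + 2*c + 2 ≠ -(m : ℝ))
    (h₄ : ∀ m : ℕ, α + β + c + 1 ≠ -(m : ℝ))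
    (hx0 : 0 < x) (hx1 : x < 1) (ht0 : 0 < |t|) (ht1 : |t| < 1) :
    HasSum (fun n : ℕ => poch (α + β + c + 1) n * poch (c + 1) n / poch (α + β + 2*c + 2) n
        * Yfun α β c n x * t^n / (Nat.factorial n : ℝ))
      (deltaF x t ^ (α + c + 1) / (x ^ (c + 1) * (x - t * deltaF x t) ^ α)
        * hypExt (-β - c) (α + c + 1) (1 - β) (deltaF x t)
        * hypExt (c + 1) (β + c + 1) (α + β + 2*c + 2) (t * deltaF x t / x)) := by
  have hCB : 1 - β - (-β - c) = c + 1 := by ring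
  have hD : α + c + 1 - (-β - c) + 1 = α + β + 2 * c + 2 := by ring
  have hsum := hasSum_genClosedForm (A := α + c + 1) (B := -β - c) h₁ (hD ▸ h₂) hx0 hx1 ht1
  rw [genClosedForm, hCB, hD, show α + c + 1 - (c + 1) = α by ring,
    show 1 - (-β - c) = β + c + 1 by ring,
    ← deltaF_eq_genDelta (mk_mem_genDomain hx0 hx1 ht1) (abs_pos.1 ht0)] at hsum
  refine hsum.congr_fun fun n => ?_
  rw [Yfun, hyp_comm, show (n : ℝ) + α + c + 1 = α + c + 1 + n by ring,
    show -(n : ℝ) - β - c = -β - c - n by ring, hypCoeff]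
  have hpoch := poch_ne_zero h₄ n
  field_simp

theorem Y_generating_function (α β c x t : ℝ)
    (h₁ : ∀ m : ℕ, 1 - β ≠ -(m : ℝ))
    (h₂ : ∀ m : ℕ, α + β + 2*c + 2 ≠ -(m : ℝ))
    (h₃ : ∀ m : ℕ, c + 1 ≠ -(m : ℝ))
    (h₄ : ∀ m : ℕ, α + β + c + 1 ≠ -(m : ℝ))
    (h₅ : ∀ m : ℕ, α + β + 2*c + 1 ≠ -(m : ℝ))
    (hx0 : 0 < x) (hx1 : x < 1) (ht0 : 0 < |t|) (ht1 : |t| < 1) :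
    (∑' n : ℕ, poch (α + β + c + 1) n * poch (c + 1) n / poch (α + β + 2*c + 2) n
        * Yfun α β c n x * t^n / (Nat.factorial n : ℝ))
    = deltaF x t ^ (α + c + 1) / (x ^ (c + 1) * (x - t * deltaF x t) ^ α)
        * hypExt (-β - c) (α + c + 1) (1 - β) (deltaF x t)
        * hypExt (c + 1) (β + c + 1) (α + β + 2*c + 2) (t * deltaF x t / x) :=
  (Y_generating_function_general α β c x t h₁ h₂ h₄ hx0 hx1 ht0 ht1).tsum_eq
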